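/- arXiv:2305.05376 — 5 statements merged into one kernel-verified Lean document; each statement's English description precedes it below -/
import Mathlib

section
/- Let (X, 𝒯) be a fuzzy topological space and let λ be a fuzzy set in X. Then λ is somewhat fuzzy open if and only if λ is somewhat fuzzy semiopen. -/
open unitInterval

/-- `Fact` instance making the unit interval `I = [0,1]` a complete lattice. -/
instance : Fact ((0:ℝ) ≤ 1) := ⟨zero_le_one⟩

namespace SomewhatFuzzy

variable {X Y : Type*}

/-- A fuzzy topology on `X` is a collection `T` of fuzzy sets (functions `X → [0,1]`,
ordered pointwise) containing the constant functions `0` and `1`, closed under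
pointwise minimum of two members, and closed under pointwise supremum of any
subfamily. -/
def IsFuzzyTopology (T : Set (X → I)) : Prop :=
  (fun _ => (0 : I)) ∈ T ∧ (fun _ => (1 : I)) ∈ T ∧
    (∀ μ ν, μ ∈ T → ν ∈ T → (fun x => μ x ⊓ ν x) ∈ T) ∧
    (∀ S : Set (X → I), S ⊆ T → (fun x => ⨆ μ ∈ S, μ x) ∈ T)

/-- The fuzzy interior of `l`: the pointwise supremum of all fuzzy open sets `≤ l`. -/
noncomputable def fInterior (T : Set (X → I)) (l : X → I) : X → I :=
  fun x => ⨆ μ ∈ {μ : X → I | μ ∈ T ∧ μ ≤ l}, μ x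

/-- A fuzzy set `μ` is fuzzy closed if `1 - μ` is fuzzy open. -/
def IsFuzzyClosed (T : Set (X → I)) (μ : X → I) : Prop :=
  (fun x => unitInterval.symm (μ x)) ∈ T

/-- The fuzzy closure of `l`: the pointwise infimum of all fuzzy closed sets `≥ l`. -/
noncomputable def fClosure (T : Set (X → I)) (l : X → I) : X → I :=
  fun x => ⨅ μ ∈ {μ : X → I | IsFuzzyClosed T μ ∧ l ≤ μ}, μ x

/-- A fuzzy set `l` is fuzzy semiopen if `l ≤ Cl(Int(l))`. -/
def IsFuzzySemiopen (T : Set (X → I)) (l : X → I) : Prop :=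
  l ≤ fClosure T (fInterior T l)

/-- The fuzzy semi-interior of `l`: the pointwise supremum of all fuzzy semiopen
sets `≤ l`. -/
noncomputable def fSemiInterior (T : Set (X → I)) (l : X → I) : X → I :=
  fun x => ⨆ μ ∈ {μ : X → I | IsFuzzySemiopen T μ ∧ μ ≤ l}, μ x

/-- A fuzzy set `μ` is fuzzy semiclosed if `1 - μ` is fuzzy semiopen. -/
def IsFuzzySemiclosed (T : Set (X → I)) (μ : X → I) : Prop :=
  IsFuzzySemiopen T (fun x => unitInterval.symm (μ x))

/-- The fuzzy semi-closure of `l`: the pointwise infimum of all fuzzy semiclosed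
sets `≥ l`. -/
noncomputable def fSemiClosure (T : Set (X → I)) (l : X → I) : X → I :=
  fun x => ⨅ μ ∈ {μ : X → I | IsFuzzySemiclosed T μ ∧ l ≤ μ}, μ x

/-- A fuzzy set `l` is somewhat fuzzy open if `l = 0` or `Int(l) ≠ 0`. -/
def SomewhatFuzzyOpen (T : Set (X → I)) (l : X → I) : Prop :=
  l = (fun _ => (0 : I)) ∨ fInterior T l ≠ (fun _ => (0 : I))

/-- A fuzzy set `l` is somewhat fuzzy semiopen if `l = 0` or `Int_s(l) ≠ 0`. -/
def SomewhatFuzzySemiopen (T : Set (X → I)) (l : X → I) : Prop :=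
  l = (fun _ => (0 : I)) ∨ fSemiInterior T l ≠ (fun _ => (0 : I))

/-- Preimage of a fuzzy set under a function: `f⁻¹(β) = β ∘ f`. -/
def fPreimage (f : X → Y) (b : Y → I) : X → I := fun x => b (f x)

/-- Image of a fuzzy set under a function:
`f(α)(y) = sup {α x : f x = y}` (supremum over the empty set being `0`). -/
noncomputable def fImage (f : X → Y) (a : X → I) : Y → I :=
  fun y => ⨆ x ∈ {x : X | f x = y}, a x

/-- `f` is fuzzy continuous if the preimage of every fuzzy open set is fuzzy open. -/
def FuzzyContinuous (T : Set (X → I)) (U : Set (Y → I)) (f : X → Y) : Prop :=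
  ∀ b ∈ U, fPreimage f b ∈ T

/-- `f` is fuzzy semicontinuous if the preimage of every fuzzy open set is fuzzy
semiopen. -/
def FuzzySemicontinuous (T : Set (X → I)) (U : Set (Y → I)) (f : X → Y) : Prop :=
  ∀ b ∈ U, IsFuzzySemiopen T (fPreimage f b)

/-- `f` is somewhat fuzzy continuous if the preimage of every fuzzy open set is
somewhat fuzzy open. -/
def SomewhatFuzzyContinuous (T : Set (X → I)) (U : Set (Y → I)) (f : X → Y) : Prop :=
  ∀ b ∈ U, SomewhatFuzzyOpen T (fPreimage f b)

/-- `f` is somewhat fuzzy semicontinuous if the preimage of every fuzzy open set is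
somewhat fuzzy semiopen. -/
def SomewhatFuzzySemicontinuous (T : Set (X → I)) (U : Set (Y → I)) (f : X → Y) : Prop :=
  ∀ b ∈ U, SomewhatFuzzySemiopen T (fPreimage f b)

/-- `f` is a fuzzy open function if the image of every fuzzy open set is fuzzy open. -/
def FuzzyOpenMap (T : Set (X → I)) (U : Set (Y → I)) (f : X → Y) : Prop :=
  ∀ a ∈ T, fImage f a ∈ U

/-- `f` is a fuzzy semiopen function if the image of every fuzzy open set is fuzzy
semiopen. -/
def FuzzySemiopenMap (T : Set (X → I)) (U : Set (Y → I)) (f : X → Y) : Prop :=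
  ∀ a ∈ T, IsFuzzySemiopen U (fImage f a)

/-- `f` is a somewhat fuzzy open function if the image of every fuzzy open set is
somewhat fuzzy open. -/
def SomewhatFuzzyOpenMap (T : Set (X → I)) (U : Set (Y → I)) (f : X → Y) : Prop :=
  ∀ a ∈ T, SomewhatFuzzyOpen U (fImage f a)

/-- `f` is a somewhat fuzzy semiopen function if the image of every fuzzy open set is
somewhat fuzzy semiopen. -/
def SomewhatFuzzySemiopenMap (T : Set (X → I)) (U : Set (Y → I)) (f : X → Y) : Prop :=
  ∀ a ∈ T, SomewhatFuzzySemiopen U (fImage f a)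

/-- Lemma 2.3: a fuzzy set is somewhat fuzzy open iff it is somewhat fuzzy semiopen. -/
theorem somewhatFuzzyOpen_iff_somewhatFuzzySemiopen
    {X : Type*} (T : Set (X → I)) (hT : IsFuzzyTopology T) (l : X → I) :
    SomewhatFuzzyOpen T l ↔ SomewhatFuzzySemiopen T l := by
  constructor
  · rintro (h | h)
    · exact Or.inl h
    · refine Or.inr fun h0 => h ?_
      funext x
      have key : fInterior T l x ≤ fSemiInterior T l x := by
        refine iSup₂_le fun μ hμ => ?_
        refine le_iSup₂_of_le (f := fun (μ : X → I)
          (_ : μ ∈ {μ : X → I | IsFuzzySemiopen T μ ∧ μ ≤ l}) => μ x) μ ⟨?_, hμ.2⟩ le_rfl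
        intro y
        refine le_iInf₂ fun ν hν => le_trans ?_ (hν.2 y)
        exact le_iSup₂_of_le (f := fun (ρ : X → I)
          (_ : ρ ∈ {ρ : X → I | ρ ∈ T ∧ ρ ≤ μ}) => ρ y) μ ⟨hμ.1, le_rfl⟩ le_rfl
      rw [h0] at key
      exact le_antisymm key bot_le
  · rintro (h | h)
    · exact Or.inl h
    · refine Or.inr fun h0 => h ?_
      funext x
      refine le_antisymm (iSup₂_le fun μ hμ => ?_) bot_le
      refine (hμ.1 x).trans ?_
      refine iInf₂_le_of_le (f := fun (ν : X → I)
        (_ : ν ∈ {ν : X → I | IsFuzzyClosed T ν ∧ fInterior T μ ≤ ν}) => ν x)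
        (fun _ => 0) ⟨?_, ?_⟩ le_rfl
      · have h1 := hT.2.1
        simpa [IsFuzzyClosed] using h1
      · rw [← h0]
        intro y
        refine iSup₂_le fun ρ hρ => ?_
        exact le_iSup₂_of_le (f := fun (ρ : X → I)
          (_ : ρ ∈ {ρ : X → I | ρ ∈ T ∧ ρ ≤ l}) => ρ y) ρ ⟨hρ.1, hρ.2.trans hμ.2⟩ le_rfl


end SomewhatFuzzy
end

section
/- Let f : (X, 𝒯) → (Y, 𝒰) be a function between fuzzy topological spaces. Then f is somewhat fuzzy continuous if and only if f is somewhat fuzzy semicontinuous. -/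
open unitInterval

namespace SomewhatFuzzy

variable {X Y : Type*}

/-- A fuzzy open set is fuzzy semiopen. -/
theorem isFuzzySemiopen_of_mem {X : Type*} (T : Set (X → I)) (μ : X → I) (h : μ ∈ T) :
    IsFuzzySemiopen T μ := by
  intro x
  refine le_iInf₂ fun ν hν => ?_
  refine le_trans ?_ (hν.2 x)
  exact le_iSup₂ (f := fun (μ' : X → I) (_ : μ' ∈ {μ' : X → I | μ' ∈ T ∧ μ' ≤ μ}) => μ' x)
    μ ⟨h, le_refl _⟩

/-- The interior vanishes iff the semi-interior vanishes. -/
theorem fInterior_eq_zero_iff {X : Type*} (T : Set (X → I)) (hT : IsFuzzyTopology T)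
    (l : X → I) :
    fInterior T l = (fun _ => (0 : I)) ↔ fSemiInterior T l = (fun _ => (0 : I)) := by
  constructor
  · intro h
    funext x
    refine le_antisymm ?_ unitInterval.nonneg'
    refine iSup₂_le fun μ hμ => ?_
    refine le_trans (hμ.1 x) ?_
    refine iInf₂_le (f := fun (ν : X → I)
      (_ : ν ∈ {ν : X → I | IsFuzzyClosed T ν ∧ fInterior T μ ≤ ν}) => ν x)
      (fun _ => (0 : I)) ⟨?_, ?_⟩
    · simpa [IsFuzzyClosed] using hT.2.1
    · rw [← h]
      intro y
      refine iSup₂_le fun ν hν => ?_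
      exact le_iSup₂ (f := fun (μ' : X → I) (_ : μ' ∈ {μ' : X → I | μ' ∈ T ∧ μ' ≤ l}) => μ' y)
        ν ⟨hν.1, hν.2.trans hμ.2⟩
  · intro h
    funext x
    refine le_antisymm ?_ unitInterval.nonneg'
    rw [← congrFun h x]
    refine iSup₂_le fun ν hν => ?_
    exact le_iSup₂ (f := fun (μ' : X → I)
      (_ : μ' ∈ {μ' : X → I | IsFuzzySemiopen T μ' ∧ μ' ≤ l}) => μ' x)
      ν ⟨isFuzzySemiopen_of_mem T ν hν.1, hν.2⟩

/-- Theorem 2.5(1): `f` is somewhat fuzzy continuous iff it is somewhat fuzzy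
semicontinuous. -/
theorem somewhatFuzzyContinuous_iff_somewhatFuzzySemicontinuous
    {X Y : Type*} (T : Set (X → I)) (U : Set (Y → I))
    (hT : IsFuzzyTopology T) (hU : IsFuzzyTopology U) (f : X → Y) :
    SomewhatFuzzyContinuous T U f ↔ SomewhatFuzzySemicontinuous T U f := by
  unfold SomewhatFuzzyContinuous SomewhatFuzzySemicontinuous SomewhatFuzzyOpen
    SomewhatFuzzySemiopen
  simp only [ne_eq, fInterior_eq_zero_iff T hT]

end SomewhatFuzzy
end

section
/- Let f : (X, 𝒯) → (Y, 𝒰) be a function between fuzzy topological spaces. If f is fuzzy semicontinuous, then f is somewhat fuzzy continuous. -/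
open unitInterval

namespace SomewhatFuzzy

variable {X Y : Type*}

/-- Every fuzzy semicontinuous function is somewhat fuzzy continuous. -/
theorem somewhatFuzzyContinuous_of_fuzzySemicontinuous
    {X Y : Type*} (T : Set (X → I)) (U : Set (Y → I))
    (hT : IsFuzzyTopology T) (hU : IsFuzzyTopology U) (f : X → Y)
    (hf : FuzzySemicontinuous T U f) :
    SomewhatFuzzyContinuous T U f := by
  intro b hb
  by_cases h : fInterior T (fPreimage f b) = fun _ => (0 : I)
  · left
    have hs := hf b hb
    unfold IsFuzzySemiopen at hs
    rw [h] at hs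
    funext x
    apply le_antisymm _ unitInterval.nonneg'
    refine (hs x).trans ?_
    have hc : IsFuzzyClosed T (fun _ : X => (0 : I)) := by
      unfold IsFuzzyClosed
      simpa using hT.2.1
    exact iInf₂_le (f := fun (μ : X → I)
      (_ : μ ∈ {μ : X → I | IsFuzzyClosed T μ ∧ (fun _ => (0 : I)) ≤ μ}) => μ x)
      (fun _ => (0 : I)) ⟨hc, le_refl _⟩
  · exact Or.inr h

end SomewhatFuzzy
end

section
/- Let f : (X, 𝒯) → (Y, 𝒰) be a function between fuzzy topological spaces. If f is a fuzzy semiopen function, then f is a somewhat fuzzy open function. -/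
open unitInterval

namespace SomewhatFuzzy

variable {X Y : Type*}

/-- Every fuzzy semiopen function is a somewhat fuzzy open function. -/
theorem somewhatFuzzyOpenMap_of_fuzzySemiopenMap
    {X Y : Type*} (T : Set (X → I)) (U : Set (Y → I))
    (hT : IsFuzzyTopology T) (hU : IsFuzzyTopology U) (f : X → Y)
    (hf : FuzzySemiopenMap T U f) :
    SomewhatFuzzyOpenMap T U f := by
  intro a ha
  by_cases h0 : fInterior U (fImage f a) = (fun _ => (0 : I))
  · left
    have h := hf a ha
    unfold IsFuzzySemiopen at h
    rw [h0] at h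
    funext y
    have hc : IsFuzzyClosed U (fun _ => (0 : I)) := by
      unfold IsFuzzyClosed
      simpa using hU.2.1
    have h2 : fClosure U (fun _ => (0 : I)) y ≤ 0 := by
      unfold fClosure
      exact iInf₂_le (f := fun (μ : Y → I) (_ : μ ∈ {μ : Y → I | IsFuzzyClosed U μ ∧ (fun _ => (0 : I)) ≤ μ}) => μ y)
        (fun _ => (0 : I)) ⟨hc, le_refl _⟩
    exact le_antisymm ((h y).trans h2) unitInterval.nonneg'
  · exact Or.inr h0

end SomewhatFuzzy
end

section
/- Let X = [0,1] and define fuzzy sets μ, λ, σ, β on X by: μ(x) = 0 for 0 ≤ x ≤ 1/2 and μ(x) = 2x − 1 for 1/2 ≤ x ≤ 1; λ(x) = 1 for 0 ≤ x ≤ 1/4, λ(x) = −4x + 2 for 1/4 ≤ x ≤ 1/2, and λ(x) = 0 for 1/2 ≤ x ≤ 1; σ(x) = 1 for 0 ≤ x ≤ 1/4, σ(x) = −4x + 2 for 1/4 ≤ x ≤ 1/2, and σ(x) = 2x − 1 for 1/2 ≤ x ≤ 1; β(x) = 2x for 0 ≤ x ≤ 1/2 and β(x) = 1 for 1/2 ≤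 x ≤ 1. Then 𝒯 = {0, μ, λ, σ, 1} is a fuzzy topology on X, and with respect to 𝒯 the fuzzy set β is somewhat fuzzy open but not fuzzy semiopen. -/
open unitInterval

namespace SomewhatFuzzy

variable {X Y : Type*}

/-- `μ(x) = 0` for `x ≤ 1/2`, and `μ(x) = 2x - 1` for `1/2 ≤ x ≤ 1`. -/
noncomputable def exMu : I → I := fun x =>
  if (x : ℝ) ≤ 1/2 then 0 else Set.projIcc 0 1 zero_le_one (2 * (x : ℝ) - 1)

/-- `λ(x) = 1` for `x ≤ 1/4`, `λ(x) = -4x + 2` for `1/4 ≤ x ≤ 1/2`, and `λ(x) = 0`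
for `1/2 ≤ x ≤ 1`. -/
noncomputable def exLam : I → I := fun x =>
  if (x : ℝ) ≤ 1/4 then 1
  else if (x : ℝ) ≤ 1/2 then Set.projIcc 0 1 zero_le_one (-4 * (x : ℝ) + 2)
  else 0

/-- `σ(x) = 1` for `x ≤ 1/4`, `σ(x) = -4x + 2` for `1/4 ≤ x ≤ 1/2`, and
`σ(x) = 2x - 1` for `1/2 ≤ x ≤ 1`. -/
noncomputable def exSig : I → I := fun x =>
  if (x : ℝ) ≤ 1/4 then 1
  else if (x : ℝ) ≤ 1/2 then Set.projIcc 0 1 zero_le_one (-4 * (x : ℝ) + 2)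
  else Set.projIcc 0 1 zero_le_one (2 * (x : ℝ) - 1)

/-- The fuzzy topology `{0, μ, λ, σ, 1}` on `[0,1]` of Example 2.4. -/
noncomputable def exT : Set (I → I) :=
  {fun _ => (0 : I), exMu, exLam, exSig, fun _ => (1 : I)}

/-- `β(x) = 2x` for `0 ≤ x ≤ 1/2`, and `β(x) = 1` for `1/2 ≤ x ≤ 1`. -/
noncomputable def exBeta : I → I := fun x =>
  if (x : ℝ) ≤ 1/2 then Set.projIcc 0 1 zero_le_one (2 * (x : ℝ)) else 1

theorem aux_inf (x : I) : exMu x ⊓ exLam x = 0 := by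
  unfold exMu exLam
  split_ifs with h1 h2 h3
  all_goals first
    | exact inf_eq_left.2 unitInterval.nonneg'
    | exact inf_eq_right.2 unitInterval.nonneg'
    | (exfalso; linarith)

theorem aux_sup (x : I) : exMu x ⊔ exLam x = exSig x := by
  unfold exMu exLam exSig
  split_ifs with h1 h2 h3
  all_goals first
    | exact sup_eq_right.2 unitInterval.nonneg'
    | exact sup_eq_left.2 unitInterval.nonneg'
    | (exfalso; linarith)

theorem aux_const (a b : I → I) (ha : a ∈ exT) (hb : b ∈ exT) :
    (fun x => a x ⊓ b x) ∈ exT ∧ (fun x => a x ⊔ b x) ∈ exT := by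
  have hml : ∀ x, exMu x ⊓ exLam x = 0 := aux_inf
  have hlm : ∀ x, exLam x ⊓ exMu x = 0 := fun x => by rw [inf_comm, aux_inf]
  have sml : ∀ x, exMu x ⊔ exLam x = exSig x := aux_sup
  have slm : ∀ x, exLam x ⊔ exMu x = exSig x := fun x => by rw [sup_comm, aux_sup]
  have m1 : ∀ x, exMu x ≤ exSig x := fun x => by rw [← aux_sup]; exact le_sup_left
  have l1 : ∀ x, exLam x ≤ exSig x := fun x => by rw [← aux_sup]; exact le_sup_right
  have e1 : ∀ x, exMu x ⊓ exSig x = exMu x := fun x => inf_eq_left.2 (m1 x)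
  have e2 : ∀ x, exSig x ⊓ exMu x = exMu x := fun x => inf_eq_right.2 (m1 x)
  have e3 : ∀ x, exLam x ⊓ exSig x = exLam x := fun x => inf_eq_left.2 (l1 x)
  have e4 : ∀ x, exSig x ⊓ exLam x = exLam x := fun x => inf_eq_right.2 (l1 x)
  have f1 : ∀ x, exMu x ⊔ exSig x = exSig x := fun x => sup_eq_right.2 (m1 x)
  have f2 : ∀ x, exSig x ⊔ exMu x = exSig x := fun x => sup_eq_left.2 (m1 x)
  have f3 : ∀ x, exLam x ⊔ exSig x = exSig x := fun x => sup_eq_right.2 (l1 x)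
  have f4 : ∀ x, exSig x ⊔ exLam x = exSig x := fun x => sup_eq_left.2 (l1 x)
  have z1 : ∀ a : I, 0 ⊓ a = 0 := fun a => inf_eq_left.2 unitInterval.nonneg'
  have z2 : ∀ a : I, a ⊓ 0 = 0 := fun a => inf_eq_right.2 unitInterval.nonneg'
  have z3 : ∀ a : I, 0 ⊔ a = a := fun a => sup_eq_right.2 unitInterval.nonneg'
  have z4 : ∀ a : I, a ⊔ 0 = a := fun a => sup_eq_left.2 unitInterval.nonneg'
  have o1 : ∀ a : I, 1 ⊓ a = a := fun a => inf_eq_right.2 unitInterval.le_one'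
  have o2 : ∀ a : I, a ⊓ 1 = a := fun a => inf_eq_left.2 unitInterval.le_one'
  have o3 : ∀ a : I, 1 ⊔ a = 1 := fun a => sup_eq_left.2 unitInterval.le_one'
  have o4 : ∀ a : I, a ⊔ 1 = 1 := fun a => sup_eq_right.2 unitInterval.le_one'
  have t0 : (fun _ => (0 : I)) ∈ exT := Or.inl rfl
  have tm : (fun x => exMu x) ∈ exT := Or.inr (Or.inl rfl)
  have tl : (fun x => exLam x) ∈ exT := Or.inr (Or.inr (Or.inl rfl))
  have ts : (fun x => exSig x) ∈ exT := Or.inr (Or.inr (Or.inr (Or.inl rfl)))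
  have t1 : (fun _ => (1 : I)) ∈ exT := Or.inr (Or.inr (Or.inr (Or.inr rfl)))
  rcases ha with rfl | rfl | rfl | rfl | rfl <;> rcases hb with rfl | rfl | rfl | rfl | rfl <;>
    simp only [hml, hlm, sml, slm, e1, e2, e3, e4, f1, f2, f3, f4, z1, z2, z3, z4, o1, o2, o3, o4,
      inf_idem, sup_idem] <;>
    constructor <;> assumption

theorem aux_top : IsFuzzyTopology exT := by
  refine ⟨Or.inl rfl, Or.inr (Or.inr (Or.inr (Or.inr rfl))),
    fun a b ha hb => (aux_const a b ha hb).1, ?_⟩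
  intro S hS
  have hT : exT.Finite := by unfold exT; exact Set.toFinite _
  have hf : S.Finite := hT.subset hS
  induction S, hf using Set.Finite.induction_on with
  | empty =>
    left
    funext x
    simp only [Set.mem_empty_iff_false, iSup_false, iSup_bot]
    rfl
  | @insert a s ha hs ih =>
    simp only [iSup_insert]
    exact (aux_const a _ (hS (Set.mem_insert _ _))
      (ih (fun y hy => hS (Set.mem_insert_of_mem _ hy)))).2

theorem aux_mu_le : exMu ≤ exBeta := by
  intro x
  unfold exMu exBeta
  split_ifs
  · exact unitInterval.nonneg'
  · exact unitInterval.le_one'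

theorem beta_zero : exBeta 0 = 0 := by
  unfold exBeta
  rw [if_pos (by norm_num)]
  exact Set.projIcc_of_le_left _ (by norm_num)

theorem aux_int : fInterior exT exBeta = exMu := by
  funext x
  unfold fInterior
  apply le_antisymm
  · apply iSup₂_le
    rintro a ⟨ha, hle⟩
    have h0 := hle 0
    rw [beta_zero] at h0
    rcases ha with rfl | rfl | rfl | rfl | rfl
    · exact unitInterval.nonneg'
    · exact le_rfl
    · exfalso
      simp [exLam] at h0
    · exfalso
      simp [exSig] at h0
    · exfalso
      simp at h0
  · exact le_iSup₂_of_le (f := fun (a : I → I) (_ : a ∈ {μ : I → I | μ ∈ exT ∧ μ ≤ exBeta}) => a x)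
      exMu ⟨Or.inr (Or.inl rfl), aux_mu_le⟩ le_rfl

/-- Example 2.4: `{0, μ, λ, σ, 1}` is a fuzzy topology on `[0,1]`, and `β` is
somewhat fuzzy open but not fuzzy semiopen with respect to it. -/
theorem exBeta_somewhatFuzzyOpen_not_semiopen :
    IsFuzzyTopology exT ∧ SomewhatFuzzyOpen exT exBeta ∧ ¬ IsFuzzySemiopen exT exBeta := by
  refine ⟨aux_top, Or.inr ?_, ?_⟩
  · rw [aux_int]
    intro h
    have h1 := congrFun h 1
    have h2 : exMu 1 = 1 := by
      unfold exMu
      rw [if_neg (by norm_num)]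
      exact Set.projIcc_of_right_le _ (by norm_num)
    rw [h2] at h1
    exact one_ne_zero h1
  · intro h
    unfold IsFuzzySemiopen at h
    rw [aux_int] at h
    have hx : (1 / 4 : ℝ) ∈ I := ⟨by norm_num, by norm_num⟩
    have h1 := h ⟨1 / 4, hx⟩
    have h2 : fClosure exT exMu ⟨1 / 4, hx⟩ ≤ unitInterval.symm (exLam ⟨1 / 4, hx⟩) := by
      unfold fClosure
      refine iInf₂_le_of_le (f := fun (a : I → I)
        (_ : a ∈ {μ : I → I | IsFuzzyClosed exT μ ∧ exMu ≤ μ}) => a ⟨1 / 4, hx⟩)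
        (fun x => unitInterval.symm (exLam x)) ⟨?_, ?_⟩ le_rfl
      · unfold IsFuzzyClosed
        simp only [unitInterval.symm_symm]
        exact Or.inr (Or.inr (Or.inl rfl))
      · intro x
        simp only [exMu, exLam]
        split_ifs
        all_goals first
          | exact unitInterval.nonneg'
          | (rw [unitInterval.symm_zero]; exact unitInterval.le_one')
          | (exfalso; linarith)
    have h3 := h1.trans h2
    have h4 : exLam ⟨1 / 4, hx⟩ = 1 := by
      unfold exLam
      rw [if_pos le_rfl]
    rw [h4, unitInterval.symm_one] at h3
    unfold exBeta at h3
    rw [if_pos (by norm_num), Set.projIcc_of_mem _ (by constructor <;> norm_num)] at h3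
    have h5 : (2 * (1 / 4) : ℝ) ≤ 0 := h3
    norm_num at h5

end SomewhatFuzzy
end
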